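/- Let (p_n)_{n≥1} be a Schauder decomposition of a complex Banach space X which is NOT R-Schauder. Then there exists a nondecreasing sequence (c_n)_{n≥1} of real numbers with 0 < c_n < 1 for all n such that the multiplier operator T = M_c ∈ B(X) satisfies sup_{n≥0} ‖T^n‖ < ∞ but the set {T^n : n ≥ 0} is not R-bounded. -/

import Mathlib

open Filter Topology NormedSpace

/-- Average over all sign vectors `(ε_1,…,ε_k) ∈ {−1,1}^k` of `‖∑_j ε_j v_j‖`. -/
noncomputable def signAvg {X : Type*} [NormedAddCommGroup X] [NormedSpace ℂ X]
    (k : ℕ) (v : Fin k → X) : ℝ :=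
  (2 ^ k : ℝ)⁻¹ * ∑ ε : Fin k → Bool, ‖∑ j : Fin k, (if ε j then (1 : ℝ) else -1) • v j‖

/-- A set of bounded operators on `X` is `R`-bounded. -/
def IsRBounded {X : Type*} [NormedAddCommGroup X] [NormedSpace ℂ X]
    (F : Set (X →L[ℂ] X)) : Prop :=
  ∃ C : ℝ, 0 ≤ C ∧ ∀ (k : ℕ) (T : Fin k → X →L[ℂ] X) (x : Fin k → X),
    (∀ j, T j ∈ F) → signAvg k (fun j => (T j) (x j)) ≤ C * signAvg k x

/-- `(p n)` is a Schauder decomposition of `X`: the `p n` are pairwise "orthogonal"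
bounded projections whose partial sums converge pointwise to the identity.
(Indexing starts at `0`, corresponding to `n = 1` in the classical notation.) -/
def IsSchauderDecomposition {X : Type*} [NormedAddCommGroup X] [NormedSpace ℂ X]
    (p : ℕ → X →L[ℂ] X) : Prop :=
  (∀ n, (p n).comp (p n) = p n) ∧
  (∀ m n, m ≠ n → (p m).comp (p n) = 0) ∧
  (∀ x : X, Tendsto (fun N => ∑ n ∈ Finset.range N, p n x) atTop (nhds x))

/-- The partial sum projection `P_N = ∑_{n<N} p_n`. -/
noncomputable def partialSum {X : Type*} [NormedAddCommGroup X] [NormedSpace ℂ X]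
    (p : ℕ → X →L[ℂ] X) (N : ℕ) : X →L[ℂ] X :=
  ∑ n ∈ Finset.range N, p n

/-!
Let `T` be the multiplier with coefficients `c n = exp (-(1/2) ^ (n ^ 2))`, which increase to `1`.
By Abel summation `‖M_d‖ ≤ |lim d| + K · Var d`, where `K` bounds the norms of the partial sums
`P_N`; hence `T` is power bounded. The coefficients approach `1` so fast that for
`m = 2 ^ (N ^ 2 + N)` the power `c n ^ m` is nearly `0` for `n ≤ N` and nearly `1` for `n > N`. Thus
`T ^ m` differs from `1 - P_{N+1}` by a multiplier whose coefficients tend to `0` and have variation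
`O(2 ^ (-N))`. A family of operators with summable norms is `R`-bounded, so `R`-boundedness of the
powers of `T` would imply that of the partial sums.
-/

section SignAverage

variable {X : Type*} [NormedAddCommGroup X] [NormedSpace ℂ X] {k : ℕ}

lemma signAvg_nonneg (v : Fin k → X) : 0 ≤ signAvg k v := by
  unfold signAvg
  positivity

lemma signAvg_zero : signAvg k (0 : Fin k → X) = 0 := by
  simp [signAvg]

lemma signAvg_add_le (v w : Fin k → X) : signAvg k (v + w) ≤ signAvg k v + signAvg k w := by
  unfold signAvg
  rw [← mul_add, ← Finset.sum_add_distrib]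
  gcongr with ε
  simp only [Pi.add_apply, smul_add, Finset.sum_add_distrib]
  exact norm_add_le _ _

lemma signAvg_sum_le {ι : Type*} (s : Finset ι) (v : ι → Fin k → X) :
    signAvg k (∑ i ∈ s, v i) ≤ ∑ i ∈ s, signAvg k (v i) :=
  Finset.le_sum_of_subadditive _ signAvg_zero.le signAvg_add_le s v

lemma signAvg_map_le (S : X →L[ℂ] X) (v : Fin k → X) :
    signAvg k (fun j => S (v j)) ≤ ‖S‖ * signAvg k v := by
  unfold signAvg
  rw [mul_left_comm, Finset.mul_sum (a := ‖S‖)]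
  gcongr with ε
  calc ‖∑ j, (if ε j then (1 : ℝ) else -1) • S (v j)‖
      = ‖S (∑ j, (if ε j then (1 : ℝ) else -1) • v j)‖ := by
        simp only [map_sum, map_real_smul S S.continuous]
    _ ≤ ‖S‖ * ‖∑ j, (if ε j then (1 : ℝ) else -1) • v j‖ := S.le_opNorm _

lemma signAvg_smul (a : ℝ) (v : Fin k → X) : signAvg k (a • v) = |a| * signAvg k v := by
  simp only [signAvg, Pi.smul_apply, smul_comm _ a, ← Finset.smul_sum, norm_smul,
    Real.norm_eq_abs, ← Finset.mul_sum, mul_left_comm]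

lemma signAvg_neg (v : Fin k → X) : signAvg k (-v) = signAvg k v := by
  simpa using signAvg_smul (-1) v

open Classical in
lemma signAvg_flip (s : Set (Fin k)) (v : Fin k → X) :
    signAvg k (fun j => if j ∈ s then v j else -v j) = signAvg k v := by
  unfold signAvg
  congr 1
  refine Fintype.sum_equiv
    (Equiv.piCongrRight fun j => if j ∈ s then Equiv.refl Bool else Equiv.boolNot) _ _ fun ε => ?_
  congr 1
  refine Finset.sum_congr rfl fun j _ => ?_
  by_cases hj : j ∈ s <;> cases hε : ε j <;> simp [hj, hε]

lemma signAvg_indicator_le (s : Set (Fin k)) (v : Fin k → X) :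
    signAvg k (s.indicator v) ≤ signAvg k v := by
  classical
  have half_sum : s.indicator v = (1 / 2 : ℝ) • (v + fun j => if j ∈ s then v j else -v j) := by
    funext j
    by_cases hj : j ∈ s
    · simp [hj, ← two_smul ℝ (v j), smul_smul]
    · simp [hj]
  calc signAvg k (s.indicator v)
      = 1 / 2 * signAvg k (v + fun j => if j ∈ s then v j else -v j) := by
        rw [half_sum, signAvg_smul, abs_of_nonneg (by norm_num)]
    _ ≤ 1 / 2 * (signAvg k v + signAvg k v) := by
        gcongr
        exact (signAvg_add_le _ _).trans_eq (by rw [signAvg_flip])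
    _ = signAvg k v := by ring

end SignAverage

section RBoundedness

open scoped Pointwise

variable {X : Type*} [NormedAddCommGroup X] [NormedSpace ℂ X] {F G : Set (X →L[ℂ] X)}

lemma IsRBounded.mono (hG : IsRBounded G) (hFG : F ⊆ G) : IsRBounded F :=
  let ⟨C, hC0, hC⟩ := hG
  ⟨C, hC0, fun k T x hT => hC k T x fun j => hFG (hT j)⟩

lemma isRBounded_singleton (S : X →L[ℂ] X) : IsRBounded {S} := by
  refine ⟨‖S‖, norm_nonneg S, fun k T x hT => ?_⟩
  obtain rfl : T = fun _ => S := funext hT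
  exact signAvg_map_le S x

lemma IsRBounded.neg (hF : IsRBounded F) : IsRBounded (-F) := by
  obtain ⟨C, hC0, hC⟩ := hF
  refine ⟨C, hC0, fun k T x hT => ?_⟩
  rw [← signAvg_neg]
  exact hC k (-T) x hT

lemma IsRBounded.add (hF : IsRBounded F) (hG : IsRBounded G) : IsRBounded (F + G) := by
  obtain ⟨C, hC0, hC⟩ := hF
  obtain ⟨D, hD0, hD⟩ := hG
  refine ⟨C + D, add_nonneg hC0 hD0, fun k T x hT => ?_⟩
  choose A hA B hB hAB using hT
  calc signAvg k (fun j => T j (x j))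
      = signAvg k ((fun j => A j (x j)) + fun j => B j (x j)) := by
        congr with j
        rw [← hAB j]
        rfl
    _ ≤ signAvg k (fun j => A j (x j)) + signAvg k (fun j => B j (x j)) := signAvg_add_le _ _
    _ ≤ C * signAvg k x + D * signAvg k x := add_le_add (hC k A x hA) (hD k B x hB)
    _ = (C + D) * signAvg k x := (add_mul _ _ _).symm

lemma isRBounded_range_of_summable_norm {ι : Type*} {S : ι → X →L[ℂ] X}
    (hS : Summable fun i => ‖S i‖) : IsRBounded (Set.range S) := by
  classical
  refine ⟨∑' i, ‖S i‖, tsum_nonneg fun _ => norm_nonneg _, fun k T x hT => ?_⟩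
  choose i hi using hT
  set s := Finset.univ.image i
  have split_by_index : (fun j => T j (x j)) =
      ∑ a ∈ s, fun j => S a ((i ⁻¹' {a}).indicator x j) := by
    funext j
    rw [Finset.sum_apply, Finset.sum_eq_single_of_mem (i j) (by simp [s])]
    · simp [hi]
    · intro a _ ha
      simp [ha.symm]
  calc signAvg k (fun j => T j (x j))
      ≤ ∑ a ∈ s, signAvg k (fun j => S a ((i ⁻¹' {a}).indicator x j)) :=
        split_by_index ▸ signAvg_sum_le _ _
    _ ≤ ∑ a ∈ s, ‖S a‖ * signAvg k x := by
        gcongr with a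
        exact (signAvg_map_le _ _).trans (by gcongr; exact signAvg_indicator_le _ _)
    _ = (∑ a ∈ s, ‖S a‖) * signAvg k x := (Finset.sum_mul _ _ _).symm
    _ ≤ (∑' a, ‖S a‖) * signAvg k x := by
        gcongr
        · exact signAvg_nonneg x
        · exact hS.sum_le_tsum _ fun _ _ => norm_nonneg _

lemma IsRBounded.range_of_summable_norm_sub {ι : Type*} {A B : ι → X →L[ℂ] X}
    (hA : IsRBounded (Set.range A)) (hAB : Summable fun i => ‖B i - A i‖) :
    IsRBounded (Set.range B) := by
  refine (hA.add (isRBounded_range_of_summable_norm hAB)).mono ?_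
  rintro _ ⟨i, rfl⟩
  exact Set.mem_add.2 ⟨A i, ⟨i, rfl⟩, B i - A i, ⟨i, rfl⟩, add_sub_cancel _ _⟩

end RBoundedness

section Variation

lemma sum_range_abs_sub_of_monotoneOn {d : ℕ → ℝ} {N : ℕ} (hd : MonotoneOn d (Set.Iic N)) :
    ∑ n ∈ Finset.range N, |d (n + 1) - d n| = d N - d 0 := by
  rw [← Finset.sum_range_sub]
  refine Finset.sum_congr rfl fun n hn => abs_of_nonneg (sub_nonneg.2 ?_)
  have hn : n < N := Finset.mem_range.1 hn
  exact hd hn.le hn n.le_succ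

lemma hasSum_abs_sub_of_monotone {d : ℕ → ℝ} {ℓ : ℝ} (hd : Monotone d)
    (hℓ : Tendsto d atTop (𝓝 ℓ)) : HasSum (fun n => |d (n + 1) - d n|) (ℓ - d 0) := by
  rw [hasSum_iff_tendsto_nat_of_nonneg fun _ => abs_nonneg _]
  simp only [fun N => sum_range_abs_sub_of_monotoneOn (hd.monotoneOn (Set.Iic N))]
  exact hℓ.sub_const _

lemma hasSum_abs_sub_of_monotoneOn_Iic_of_monotoneOn_Ici {d : ℕ → ℝ} {ℓ : ℝ} {N : ℕ}
    (hd : MonotoneOn d (Set.Iic N)) (hd' : MonotoneOn d (Set.Ici (N + 1)))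
    (hℓ : Tendsto d atTop (𝓝 ℓ)) :
    HasSum (fun n => |d (n + 1) - d n|)
      (d N - d 0 + |d (N + 1) - d N| + (ℓ - d (N + 1))) := by
  have tail_monotone : Monotone fun n => d (n + (N + 1)) := fun a b hab =>
    hd' (Nat.le_add_left _ _) (Nat.le_add_left _ _) (by gcongr)
  have tail := hasSum_abs_sub_of_monotone tail_monotone ((tendsto_add_atTop_iff_nat (N + 1)).2 hℓ)
  rw [← hasSum_nat_add_iff' (N + 1), Finset.sum_range_succ, sum_range_abs_sub_of_monotoneOn hd,
    add_sub_cancel_left]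
  simpa [add_right_comm] using tail

lemma monotone_pow_of_nonneg {c : ℕ → ℝ} (hc : Monotone c) (hc0 : 0 ≤ c 0) (m : ℕ) :
    Monotone fun n => c n ^ m := fun a _ hab =>
  pow_le_pow_left₀ (hc0.trans (hc a.zero_le)) (hc hab) m

lemma tendsto_sub_step {e : ℕ → ℝ} {ℓ : ℝ} (he : Tendsto e atTop (𝓝 ℓ)) (N : ℕ) :
    Tendsto (fun n => e n - if n ≤ N then 0 else 1) atTop (𝓝 (ℓ - 1)) := by
  refine (he.sub_const 1).congr' ?_
  filter_upwards [eventually_gt_atTop N] with n hn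
  rw [if_neg hn.not_ge]

lemma hasSum_abs_sub_of_monotone_sub_step {e : ℕ → ℝ} (he : Monotone e) (he0 : 0 ≤ e 0)
    (hlim : Tendsto e atTop (𝓝 1)) (N : ℕ) :
    HasSum (fun n => |(e (n + 1) - if n + 1 ≤ N then 0 else 1) - (e n - if n ≤ N then 0 else 1)|)
      (2 * (e N + (1 - e (N + 1))) - e 0) := by
  set d : ℕ → ℝ := fun n => e n - if n ≤ N then 0 else 1
  have d_of_le {n : ℕ} (hn : n ≤ N) : d n = e n := by simp [d, hn]
  have d_of_lt {n : ℕ} (hn : N < n) : d n = e n - 1 := by simp [d, hn.not_ge]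
  have d_mono : MonotoneOn d (Set.Iic N) := fun a ha b hb hab => by
    rw [d_of_le ha, d_of_le hb]
    exact he hab
  have d_mono' : MonotoneOn d (Set.Ici (N + 1)) := fun a ha b hb hab => by
    rw [d_of_lt ha, d_of_lt hb]
    linarith [he hab]
  have d_lim : Tendsto d atTop (𝓝 0) := by simpa using tendsto_sub_step hlim N
  have jump_nonpos : e (N + 1) - 1 - e N ≤ 0 := by
    linarith [he.ge_of_tendsto hlim (N + 1), he N.zero_le]
  -- `d` rises by `e N - e 0`, falls by `1 - (e (N + 1) - e N)`, and rises by `1 - e (N + 1)`.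
  convert hasSum_abs_sub_of_monotoneOn_Iic_of_monotoneOn_Ici d_mono d_mono' d_lim using 1
  rw [d_of_le le_rfl, d_of_le N.zero_le, d_of_lt N.lt_succ_self, abs_of_nonpos jump_nonpos]
  ring

end Variation

section Multiplier

variable {X : Type*} [NormedAddCommGroup X] [NormedSpace ℂ X] {p : ℕ → X →L[ℂ] X}

/-- `T` is the multiplier `M_c` of the sequence `p` with coefficients `c`: the series `∑ c_n p_n`
converges to `T` in the strong operator topology. -/
def IsMultiplier (p : ℕ → X →L[ℂ] X) (c : ℕ → ℂ) (T : X →L[ℂ] X) : Prop :=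
  ∀ x, Tendsto (fun N => ∑ n ∈ Finset.range N, c n • p n x) atTop (𝓝 (T x))

namespace IsMultiplier

variable {c d : ℕ → ℂ} {S T : X →L[ℂ] X}

lemma unique (hS : IsMultiplier p c S) (hT : IsMultiplier p c T) : S = T :=
  ContinuousLinearMap.ext fun x => tendsto_nhds_unique (hS x) (hT x)

lemma sub (hS : IsMultiplier p c S) (hT : IsMultiplier p d T) :
    IsMultiplier p (c - d) (S - T) := fun x => by
  simpa [sub_smul] using (hS x).sub (hT x)

end IsMultiplier

lemma partialSum_apply (p : ℕ → X →L[ℂ] X) (N : ℕ) (x : X) :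
    partialSum p N x = ∑ n ∈ Finset.range N, p n x := by
  simp [partialSum]

lemma norm_smul_partialSum_le {K : ℝ} (hK : ∀ N, ‖partialSum p N‖ ≤ K) (a : ℂ) (N : ℕ) :
    ‖a • partialSum p N‖ ≤ K * ‖a‖ := by
  rw [norm_smul, mul_comm]
  gcongr
  exact hK N

lemma isMultiplier_partialSum (p : ℕ → X →L[ℂ] X) (N : ℕ) :
    IsMultiplier p (fun n => if n < N then 1 else 0) (partialSum p N) := fun x => by
  refine tendsto_atTop_of_eventually_const (i₀ := N) fun M hM => ?_
  have filter_lt : (Finset.range M).filter (· < N) = Finset.range N := by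
    ext n
    simp only [Finset.mem_filter, Finset.mem_range]
    omega
  simp [partialSum_apply, ite_smul, ← Finset.sum_filter, filter_lt]

namespace IsSchauderDecomposition

variable {c d : ℕ → ℂ} {S T : X →L[ℂ] X} {K : ℝ}

lemma tendsto_partialSum (hp : IsSchauderDecomposition p) (x : X) :
    Tendsto (fun N => partialSum p N x) atTop (𝓝 x) := by
  simpa only [partialSum_apply] using hp.2.2 x

lemma exists_norm_partialSum_le [CompleteSpace X] (hp : IsSchauderDecomposition p) :
    ∃ K, ∀ N, ‖partialSum p N‖ ≤ K := by
  refine banach_steinhaus fun x => ?_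
  obtain ⟨C, hC⟩ := (hp.tendsto_partialSum x).norm.bddAbove_range
  exact ⟨C, fun N => hC ⟨N, rfl⟩⟩

lemma isMultiplier_one (hp : IsSchauderDecomposition p) : IsMultiplier p 1 1 := fun x => by
  simpa using hp.2.2 x

lemma apply_apply (hp : IsSchauderDecomposition p) (m n : ℕ) (x : X) :
    p m (p n x) = if m = n then p m x else 0 := by
  split_ifs with h
  · subst h
    exact DFunLike.congr_fun (hp.1 m) x
  · exact DFunLike.congr_fun (hp.2.1 m n h) x

lemma apply_multiplier (hp : IsSchauderDecomposition p) (hT : IsMultiplier p c T) (n : ℕ) (x : X) :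
    p n (T x) = c n • p n x := by
  refine tendsto_nhds_unique (((p n).continuous.tendsto _).comp (hT x))
    (tendsto_atTop_of_eventually_const (i₀ := n + 1) fun N hN => ?_)
  have hnN : n < N := hN
  simp [hp.apply_apply, hnN]

lemma isMultiplier_mul (hp : IsSchauderDecomposition p) (hS : IsMultiplier p c S)
    (hT : IsMultiplier p d T) : IsMultiplier p (c * d) (S * T) := fun x => by
  simpa [hp.apply_multiplier hT, smul_smul] using hS (T x)

lemma isMultiplier_pow (hp : IsSchauderDecomposition p) (hT : IsMultiplier p c T) (m : ℕ) :
    IsMultiplier p (c ^ m) (T ^ m) := by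
  induction m with
  | zero => simpa using hp.isMultiplier_one
  | succ m ih => simpa only [pow_succ] using hp.isMultiplier_mul ih hT

lemma isMultiplier_of_summable (hp : IsSchauderDecomposition p) {ℓ : ℂ}
    (hc : Tendsto c atTop (𝓝 ℓ))
    (hsum : Summable fun n => (c (n + 1) - c n) • partialSum p (n + 1)) :
    IsMultiplier p c (ℓ • 1 - ∑' n, (c (n + 1) - c n) • partialSum p (n + 1)) := fun x => by
  have abel_summation N : ∑ n ∈ Finset.range (N + 1), c n • p n x =
      c N • partialSum p (N + 1) x -
        ∑ n ∈ Finset.range N, (c (n + 1) - c n) • partialSum p (n + 1) x := by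
    simpa only [partialSum_apply, Nat.add_sub_cancel] using
      Finset.sum_range_by_parts c (p · x) (N + 1)
  rw [← tendsto_add_atTop_iff_nat 1]
  simp only [abel_summation]
  have tail := (hsum.hasSum.mapL (ContinuousLinearMap.apply ℂ X x)).tendsto_sum_nat
  have head := hc.smul ((tendsto_add_atTop_iff_nat 1).2 (hp.tendsto_partialSum x))
  exact head.sub tail

lemma exists_isMultiplier [CompleteSpace X] (hp : IsSchauderDecomposition p)
    (hc : Summable fun n => ‖c (n + 1) - c n‖) : ∃ T, IsMultiplier p c T := by
  obtain ⟨K, hK⟩ := hp.exists_norm_partialSum_le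
  have cauchy : CauchySeq c := cauchySeq_of_summable_dist (by simpa only [dist_eq_norm'] using hc)
  obtain ⟨ℓ, hℓ⟩ := cauchySeq_tendsto_of_complete cauchy
  exact ⟨_, hp.isMultiplier_of_summable hℓ
    (.of_norm_bounded (hc.mul_left K) fun n => norm_smul_partialSum_le hK _ _)⟩

lemma norm_multiplier_le [CompleteSpace X] (hp : IsSchauderDecomposition p)
    (hK : ∀ N, ‖partialSum p N‖ ≤ K) {ℓ : ℂ} {V : ℝ} (hc : Tendsto c atTop (𝓝 ℓ))
    (hV : HasSum (fun n => ‖c (n + 1) - c n‖) V) (hT : IsMultiplier p c T) :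
    ‖T‖ ≤ ‖ℓ‖ + K * V := by
  have term_le n : ‖(c (n + 1) - c n) • partialSum p (n + 1)‖ ≤ K * ‖c (n + 1) - c n‖ :=
    norm_smul_partialSum_le hK _ _
  have hsum := Summable.of_norm_bounded (hV.summable.mul_left K) term_le
  rw [hT.unique (hp.isMultiplier_of_summable hc hsum)]
  refine (norm_sub_le _ _).trans (add_le_add ?_ (tsum_of_norm_bounded (hV.mul_left K) term_le))
  rw [norm_smul]
  exact mul_le_of_le_one_right (norm_nonneg ℓ) ContinuousLinearMap.norm_id_le

lemma norm_multiplier_ofReal_le [CompleteSpace X] (hp : IsSchauderDecomposition p)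
    (hK : ∀ N, ‖partialSum p N‖ ≤ K) {e : ℕ → ℝ} {ℓ V : ℝ} (he : Tendsto e atTop (𝓝 ℓ))
    (hV : HasSum (fun n => |e (n + 1) - e n|) V) (hT : IsMultiplier p (fun n => e n) T) :
    ‖T‖ ≤ |ℓ| + K * V := by
  rw [← Real.norm_eq_abs, ← Complex.norm_real]
  refine hp.norm_multiplier_le hK ((Complex.continuous_ofReal.tendsto ℓ).comp he) ?_ hT
  simpa only [Function.comp_apply, ← Complex.ofReal_sub, Complex.norm_real, Real.norm_eq_abs]
    using hV

section Monotone

variable [CompleteSpace X] {e : ℕ → ℝ}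

lemma exists_isMultiplier_of_monotone (hp : IsSchauderDecomposition p) (he : Monotone e)
    {ℓ : ℝ} (hlim : Tendsto e atTop (𝓝 ℓ)) : ∃ T, IsMultiplier p (fun n => e n) T := by
  refine hp.exists_isMultiplier ?_
  simpa only [← Complex.ofReal_sub, Complex.norm_real, Real.norm_eq_abs] using
    (hasSum_abs_sub_of_monotone he hlim).summable

lemma norm_multiplier_le_of_monotone (hp : IsSchauderDecomposition p)
    (hK : ∀ N, ‖partialSum p N‖ ≤ K) (he : Monotone e) (he0 : 0 ≤ e 0)
    (hlim : Tendsto e atTop (𝓝 1)) (hT : IsMultiplier p (fun n => e n) T) : ‖T‖ ≤ 1 + K := by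
  have hK0 : 0 ≤ K := (norm_nonneg _).trans (hK 0)
  calc ‖T‖ ≤ |1| + K * (1 - e 0) :=
        hp.norm_multiplier_ofReal_le hK hlim (hasSum_abs_sub_of_monotone he hlim) hT
    _ ≤ 1 + K * 1 := by
        rw [abs_one]
        gcongr
        linarith
    _ = 1 + K := by rw [mul_one]

lemma norm_multiplier_sub_one_sub_partialSum_le (hp : IsSchauderDecomposition p)
    (hK : ∀ N, ‖partialSum p N‖ ≤ K) (he : Monotone e) (he0 : 0 ≤ e 0)
    (hlim : Tendsto e atTop (𝓝 1)) (hT : IsMultiplier p (fun n => e n) T) (N : ℕ) :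
    ‖T - (1 - partialSum p (N + 1))‖ ≤ 2 * K * (e N + (1 - e (N + 1))) := by
  have hK0 : 0 ≤ K := (norm_nonneg _).trans (hK 0)
  set d : ℕ → ℝ := fun n => e n - if n ≤ N then 0 else 1
  have d_lim : Tendsto d atTop (𝓝 0) := by simpa using tendsto_sub_step hlim N
  have hd : IsMultiplier p (fun n => d n) (T - (1 - partialSum p (N + 1))) := by
    convert hT.sub (hp.isMultiplier_one.sub (isMultiplier_partialSum p (N + 1))) using 1
    funext n
    by_cases hn : n ≤ N <;> simp [d, hn]
  calc ‖T - (1 - partialSum p (N + 1))‖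
      ≤ |0| + K * (2 * (e N + (1 - e (N + 1))) - e 0) :=
        hp.norm_multiplier_ofReal_le hK d_lim
          (hasSum_abs_sub_of_monotone_sub_step he he0 hlim N) hd
    _ ≤ 0 + K * (2 * (e N + (1 - e (N + 1)))) := by
        rw [abs_zero]
        gcongr
        linarith
    _ = 2 * K * (e N + (1 - e (N + 1))) := by ring

end Monotone

section Powers

variable {c : ℕ → ℝ}

lemma isMultiplier_ofReal_pow (hp : IsSchauderDecomposition p)
    (hT : IsMultiplier p (fun n => c n) T) (m : ℕ) :
    IsMultiplier p (fun n => ((c n ^ m : ℝ) : ℂ)) (T ^ m) := by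
  convert hp.isMultiplier_pow hT m using 1
  funext n
  simp

variable [CompleteSpace X]

lemma norm_multiplier_pow_le (hp : IsSchauderDecomposition p)
    (hK : ∀ N, ‖partialSum p N‖ ≤ K) (hc : Monotone c) (hc0 : 0 ≤ c 0)
    (hlim : Tendsto c atTop (𝓝 1)) (hT : IsMultiplier p (fun n => c n) T) (m : ℕ) :
    ‖T ^ m‖ ≤ 1 + K :=
  hp.norm_multiplier_le_of_monotone hK (monotone_pow_of_nonneg hc hc0 m) (pow_nonneg hc0 m)
    (by simpa using hlim.pow m) (hp.isMultiplier_ofReal_pow hT m)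

lemma isRBounded_partialSum_of_isRBounded_pow (hp : IsSchauderDecomposition p)
    (hc : Monotone c) (hc0 : 0 ≤ c 0) (hlim : Tendsto c atTop (𝓝 1))
    (hT : IsMultiplier p (fun n => c n) T) {m : ℕ → ℕ}
    (hm : Summable fun N => c N ^ m N + (1 - c (N + 1) ^ m N))
    (hR : IsRBounded (Set.range fun n => T ^ n)) :
    IsRBounded (Set.range fun N => partialSum p (N + 1)) := by
  obtain ⟨K, hK⟩ := hp.exists_norm_partialSum_le
  have near_step N : ‖partialSum p (N + 1) - (1 - T ^ m N)‖ ≤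
      2 * K * (c N ^ m N + (1 - c (N + 1) ^ m N)) := by
    rw [show partialSum p (N + 1) - (1 - T ^ m N) = T ^ m N - (1 - partialSum p (N + 1)) by abel]
    exact hp.norm_multiplier_sub_one_sub_partialSum_le hK (monotone_pow_of_nonneg hc hc0 (m N))
      (pow_nonneg hc0 _) (by simpa using hlim.pow (m N)) (hp.isMultiplier_ofReal_pow hT (m N)) N
  have one_sub_pow : IsRBounded (Set.range fun N => 1 - T ^ m N) := by
    refine ((isRBounded_singleton 1).add hR.neg).mono ?_
    rintro _ ⟨N, rfl⟩
    exact Set.mem_add.2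
      ⟨1, rfl, -T ^ m N, Set.neg_mem_neg.2 ⟨m N, rfl⟩, (sub_eq_add_neg _ _).symm⟩
  exact one_sub_pow.range_of_summable_norm_sub
    (.of_nonneg_of_le (fun _ => norm_nonneg _) near_step (hm.mul_left (2 * K)))

end Powers

end IsSchauderDecomposition

end Multiplier

section LacunaryCoefficients

/-- The coefficients of the multiplier. They approach `1` fast enough that the exponent
`2 ^ (N ^ 2 + N)` separates the coefficient with index `N` from the one with index `N + 1`. -/
noncomputable def lacunaryCoeff (n : ℕ) : ℝ :=
  Real.exp (-(1 / 2) ^ n ^ 2)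

lemma lacunaryCoeff_pos (n : ℕ) : 0 < lacunaryCoeff n :=
  Real.exp_pos _

lemma lacunaryCoeff_lt_one (n : ℕ) : lacunaryCoeff n < 1 :=
  Real.exp_lt_one_iff.2 (neg_neg_of_pos (by positivity))

lemma monotone_lacunaryCoeff : Monotone lacunaryCoeff := fun a b hab =>
  Real.exp_le_exp.2 (neg_le_neg
    (pow_le_pow_of_le_one (by norm_num) (by norm_num) (Nat.pow_le_pow_left hab 2)))

lemma tendsto_lacunaryCoeff : Tendsto lacunaryCoeff atTop (𝓝 1) := by
  have half_pow : Tendsto (fun n : ℕ => (1 / 2 : ℝ) ^ n ^ 2) atTop (𝓝 0) :=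
    (tendsto_pow_atTop_nhds_zero_of_lt_one (by norm_num) (by norm_num)).comp
      (tendsto_pow_atTop two_ne_zero)
  have := (Real.continuous_exp.tendsto _).comp half_pow.neg
  rwa [neg_zero, Real.exp_zero] at this

lemma lacunaryCoeff_pow (n k : ℕ) :
    lacunaryCoeff n ^ 2 ^ k = Real.exp (-(2 ^ k * (1 / 2) ^ n ^ 2)) := by
  rw [lacunaryCoeff, ← Real.exp_nat_mul]
  push_cast
  rw [mul_neg]

lemma lacunaryCoeff_pow_le (N : ℕ) : lacunaryCoeff N ^ 2 ^ (N ^ 2 + N) ≤ (1 / 2) ^ N := by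
  have exponent : (2 : ℝ) ^ (N ^ 2 + N) * (1 / 2) ^ N ^ 2 = 2 ^ N := by
    rw [one_div_pow, pow_add]
    field_simp
  rw [lacunaryCoeff_pow, exponent, Real.exp_neg, one_div_pow, one_div]
  gcongr
  linarith [Real.add_one_le_exp ((2 : ℝ) ^ N)]

lemma one_sub_lacunaryCoeff_succ_pow_le (N : ℕ) :
    1 - lacunaryCoeff (N + 1) ^ 2 ^ (N ^ 2 + N) ≤ (1 / 2) ^ N := by
  have exponent : (2 : ℝ) ^ (N ^ 2 + N) * (1 / 2) ^ (N + 1) ^ 2 = (1 / 2) ^ (N + 1) := by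
    rw [show (N + 1) ^ 2 = N ^ 2 + N + (N + 1) by ring, pow_add (1 / 2 : ℝ), ← mul_assoc,
      ← mul_pow]
    norm_num
  have half_pow_succ_le : (1 / 2 : ℝ) ^ (N + 1) ≤ (1 / 2) ^ N :=
    pow_le_pow_of_le_one (by norm_num) (by norm_num) N.le_succ
  rw [lacunaryCoeff_pow, exponent]
  linarith [Real.one_sub_le_exp_neg ((1 / 2 : ℝ) ^ (N + 1))]

lemma summable_lacunaryCoeff_pow :
    Summable fun N => lacunaryCoeff N ^ 2 ^ (N ^ 2 + N) +
      (1 - lacunaryCoeff (N + 1) ^ 2 ^ (N ^ 2 + N)) := by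
  refine .of_nonneg_of_le (fun N => ?_)
    (fun N => add_le_add (lacunaryCoeff_pow_le N) (one_sub_lacunaryCoeff_succ_pow_le N))
    (summable_geometric_two.add summable_geometric_two)
  exact add_nonneg (pow_nonneg (lacunaryCoeff_pos N).le _)
    (sub_nonneg.2 (pow_le_one₀ (lacunaryCoeff_pos _).le (lacunaryCoeff_lt_one _).le))

end LacunaryCoefficients

/-- If a Schauder decomposition is not `R`-Schauder, there is a nondecreasing sequence
`0 < c_n < 1` such that the multiplier `T = M_c` is power bounded but
`{T^n : n ≥ 0}` is not `R`-bounded. -/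
theorem statement1 {X : Type*} [NormedAddCommGroup X] [NormedSpace ℂ X] [CompleteSpace X]
    (p : ℕ → X →L[ℂ] X) (hp : IsSchauderDecomposition p)
    (hnotR : ¬ IsRBounded (Set.range fun N : ℕ => partialSum p (N + 1))) :
    ∃ c : ℕ → ℝ, Monotone c ∧ (∀ n, 0 < c n ∧ c n < 1) ∧
      ∃ T : X →L[ℂ] X,
        (∀ x : X, Tendsto (fun N => ∑ n ∈ Finset.range N, ((c n : ℝ) : ℂ) • p n x)
          atTop (nhds (T x))) ∧
        (∃ C : ℝ, ∀ n : ℕ, ‖T ^ n‖ ≤ C) ∧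
        ¬ IsRBounded (Set.range fun n : ℕ => T ^ n) := by
  have hmono := monotone_lacunaryCoeff
  have hlim := tendsto_lacunaryCoeff
  have hpos : 0 ≤ lacunaryCoeff 0 := (lacunaryCoeff_pos 0).le
  obtain ⟨K, hK⟩ := hp.exists_norm_partialSum_le
  obtain ⟨T, hT⟩ := hp.exists_isMultiplier_of_monotone hmono hlim
  refine ⟨lacunaryCoeff, hmono, fun n => ⟨lacunaryCoeff_pos n, lacunaryCoeff_lt_one n⟩, T, hT,
    ⟨1 + K, hp.norm_multiplier_pow_le hK hmono hpos hlim hT⟩, fun hR => hnotR ?_⟩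
  exact hp.isRBounded_partialSum_of_isRBounded_pow hmono hpos hlim hT
    summable_lacunaryCoeff_pow hR
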